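/- Let d = 3. For every integer n ≥ 1, a(n,1) = 2·a(n,0) + 2(3n−3)·a(n−1,0) + 2·a(n−1,1). -/

import Mathlib

/-- A generalized linear diagram on points `1,…,N` whose blocks all have size `d`:
a partition of `{1,…,N}` into blocks of size `d`. -/
def IsLinearDiagram (N d : ℕ) (P : Finset (Finset ℕ)) : Prop :=
  (∀ b ∈ P, b.card = d) ∧ (∀ b ∈ P, ∀ x ∈ b, x ∈ Finset.Icc 1 N) ∧
    ∀ x ∈ Finset.Icc 1 N, ∃! b : Finset ℕ, b ∈ P ∧ x ∈ b

/-- The number of loops of a linear diagram on points `1,…,N`: indices `i` with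
`1 ≤ i ≤ N - 1` such that `i` and `i + 1` lie in the same block. -/
noncomputable def linLoops (N : ℕ) (P : Finset (Finset ℕ)) : ℕ :=
  Set.ncard {i : ℕ | 1 ≤ i ∧ i + 1 ≤ N ∧ ∃ b ∈ P, i ∈ b ∧ i + 1 ∈ b}

/-- `numA d n k` : the number of generalized linear diagrams of order `(n,d)`
with exactly `k` loops. -/
noncomputable def numA (d n k : ℕ) : ℕ :=
  Set.ncard {P : Finset (Finset ℕ) | IsLinearDiagram (n * d) d P ∧ linLoops (n * d) P = k}

/-- `numA` with an integer loop index, zero for negative indices. -/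
noncomputable def numAZ (d n : ℕ) (k : ℤ) : ℕ :=
  if 0 ≤ k then numA d n k.toNat else 0

/-- Binomial coefficient with integer arguments: `0` when `y < 0` or `y > x`. -/
def iChoose (x y : ℤ) : ℕ :=
  if 0 ≤ y ∧ y ≤ x then x.toNat.choose y.toNat else 0

/-- A generalized chord diagram on `ZMod N` whose blocks all have size `d`:
a partition of `ZMod N` into blocks of size `d`. -/
def IsChordDiagram (N d : ℕ) (P : Finset (Finset (ZMod N))) : Prop :=
  (∀ b ∈ P, b.card = d) ∧ ∀ x : ZMod N, ∃! b : Finset (ZMod N), b ∈ P ∧ x ∈ b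

/-- A chord diagram is loopless if no residues `i`, `i+1` lie in the same block. -/
def ChordLoopless (N : ℕ) (P : Finset (Finset (ZMod N))) : Prop :=
  ∀ i : ZMod N, ∀ b ∈ P, i ∈ b → i + 1 ∈ b → False

/-- `numB d n` : the number of loopless generalized chord diagrams of order `(n,d)`. -/
noncomputable def numB (d n : ℕ) : ℕ :=
  Set.ncard {P : Finset (Finset (ZMod (n * d))) |
    IsChordDiagram (n * d) d P ∧ ChordLoopless (n * d) P}

/-- The shift `i ↦ i + v` modulo `M`, on the representatives `1,…,M`. -/
def shiftMod (M v i : ℕ) : ℕ := if i + v ≤ M then i + v else i + v - M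

/-- An `m`-symmetric linear diagram with sector size `v` and blocks of size `d`:
a partition of `{1,…,m·v}` into blocks of size `d` invariant under the shift by `v`
modulo `m·v`. -/
def IsMSymLinear (d m v : ℕ) (P : Finset (Finset ℕ)) : Prop :=
  IsLinearDiagram (m * v) d P ∧ ∀ b ∈ P, b.image (shiftMod (m * v) v) ∈ P

/-- The number of loops lying in sector `s` (sectors numbered from `0`):
indices `i` with `s·v + 1 ≤ i ≤ (s+1)·v - 1` such that `i` and `i + 1` lie
in the same block. -/
noncomputable def sectorLoops (v : ℕ) (P : Finset (Finset ℕ)) (s : ℕ) : ℕ :=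
  Set.ncard {i : ℕ | s * v + 1 ≤ i ∧ i + 1 ≤ (s + 1) * v ∧ ∃ b ∈ P, i ∈ b ∧ i + 1 ∈ b}

/-- `numAtil d m v k` : the number of `m`-symmetric linear diagrams with sector size `v`,
blocks of size `d`, and exactly `k` loops in each sector (`ã(v,k;m,d)`). -/
noncomputable def numAtil (d m v k : ℕ) : ℕ :=
  Set.ncard {P : Finset (Finset ℕ) |
    IsMSymLinear d m v P ∧ ∀ s < m, sectorLoops v P s = k}

/-!
Let `G(u, v)` be the number of loopless partitions of `{1,…,3n-1} \ {u, v}` into blocks of size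
`3`. In a diagram of order `n` whose only loop is at `i`, delete the block `{i, i + 1, y}` and close
up the position `i + 1`: no new loop appears, because position `i` is now empty. This gives
`a(n,1) = ∑ G(i, z)` over ordered pairs of distinct, non-adjacent points of `{1,…,3n-1}`, which is
twice the sum over `u + 2 ≤ v`. Deleting the block `{u, v, 3n}` of the last point in a loopless
diagram gives the same sum restricted to `v < 3n-1`. So `a(n,1) - 2 a(n,0) = 2 ∑ G(u, 3n-1)`, with
`u` running over `{1,…,3n-3}`. Closing up the position `u` turns what `G(u, 3n-1)` counts into the
diagrams of order `n-1` with no loop except possibly one at `u-1`; summing over `u` counts every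
loopless diagram `3n-3` times and every diagram with one loop once.
-/

open Finset

/-- Renames the points of a family of blocks along `f`. -/
def relabel {α β : Type*} (f : α ↪ β) : Finset (Finset α) ↪ Finset (Finset β) :=
  (mapEmbedding (mapEmbedding f).toEmbedding).toEmbedding

lemma relabel_apply {α β : Type*} (f : α ↪ β) (P : Finset (Finset α)) :
    relabel f P = P.map (mapEmbedding f).toEmbedding := rfl

section BlockPartitions

variable {α β : Type*} [DecidableEq α] [DecidableEq β] {S b : Finset α} {d : ℕ}
  {P Q : Finset (Finset α)} {x : α}

open Classical in
/-- The partitions of `S` into blocks of size `d`, each recorded as its set of blocks; a linear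
diagram is the case where `S` is an interval of natural numbers. -/
noncomputable def blockPartitions (S : Finset α) (d : ℕ) : Finset (Finset (Finset α)) :=
  {P ∈ (S.powersetCard d).powerset | P.biUnion id = S ∧ (P : Set (Finset α)).PairwiseDisjoint id}

lemma mem_blockPartitions : P ∈ blockPartitions S d ↔
    (∀ b ∈ P, #b = d) ∧ P.biUnion id = S ∧ (P : Set (Finset α)).PairwiseDisjoint id := by
  simp only [blockPartitions, mem_filter, mem_powerset]
  refine and_congr_left fun ⟨hS, _⟩ ↦ ⟨fun h b hb ↦ (mem_powersetCard.1 (h hb)).2, fun h b hb ↦ ?_⟩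
  exact mem_powersetCard.2 ⟨hS ▸ subset_biUnion_of_mem id hb, h b hb⟩

lemma subset_of_mem_blockPartitions (hP : P ∈ blockPartitions S d) (hb : b ∈ P) : b ⊆ S :=
  (mem_blockPartitions.1 hP).2.1 ▸ subset_biUnion_of_mem id hb

lemma exists_mem_of_mem_blockPartitions (hP : P ∈ blockPartitions S d) (hx : x ∈ S) :
    ∃ b ∈ P, x ∈ b := by
  rw [← (mem_blockPartitions.1 hP).2.1] at hx
  simpa using hx

lemma block_unique_of_mem_blockPartitions {c : Finset α} (hP : P ∈ blockPartitions S d) (hb : b ∈ P)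
    (hc : c ∈ P) (hxb : x ∈ b) (hxc : x ∈ c) : b = c :=
  (mem_blockPartitions.1 hP).2.2.elim_finset hb hc x hxb hxc

lemma notMem_of_mem_blockPartitions_sdiff (hQ : Q ∈ blockPartitions (S \ b) d) (hx : x ∈ b) :
    b ∉ Q := fun hb ↦ (mem_sdiff.1 (subset_of_mem_blockPartitions hQ hb hx)).2 hx

lemma insert_mem_blockPartitions (hb : b ∉ Q) : insert b Q ∈ blockPartitions S d ↔
    b ∈ S.powersetCard d ∧ Q ∈ blockPartitions (S \ b) d := by
  have hdisj : (∀ c ∈ Q, b ≠ c → Disjoint b c) ↔ Disjoint b (Q.biUnion id) := by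
    rw [disjoint_biUnion_right]
    exact forall₂_congr fun c hc ↦ by simp [show b ≠ c from fun h ↦ hb (h ▸ hc)]
  have hunion : b ∪ Q.biUnion id = S ∧ Disjoint b (Q.biUnion id) ↔
      b ⊆ S ∧ Q.biUnion id = S \ b := by
    constructor
    · rintro ⟨rfl, h⟩
      exact ⟨subset_union_left, (union_sdiff_cancel_left h).symm⟩
    · rintro ⟨h, hQ⟩
      rw [hQ]
      exact ⟨union_sdiff_of_subset h, disjoint_sdiff⟩
  simp only [mem_blockPartitions, mem_powersetCard, forall_mem_insert, biUnion_insert, id,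
    coe_insert, Set.pairwiseDisjoint_insert, mem_coe] at hdisj hunion ⊢
  tauto

lemma card_filter_blockPartitions_eq_sum_block (hx : x ∈ S) (p : Finset (Finset α) → Prop)
    [DecidablePred p] :
    #{P ∈ blockPartitions S d | p P} =
      ∑ b ∈ S.powersetCard d with x ∈ b,
        #{Q ∈ blockPartitions (S \ b) d | p (insert b Q)} := by
  rw [← card_sigma]
  symm
  refine card_bij (fun t _ ↦ insert t.1 t.2) ?_ ?_ ?_
  · rintro ⟨b, Q⟩ h
    simp only [mem_sigma, mem_filter] at h ⊢
    exact ⟨(insert_mem_blockPartitions (notMem_of_mem_blockPartitions_sdiff h.2.1 h.1.2)).2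
      ⟨h.1.1, h.2.1⟩, h.2.2⟩
  · rintro ⟨b, Q⟩ h ⟨c, R⟩ h' heq
    simp only [mem_sigma, mem_filter] at h h' heq
    have hbQ := notMem_of_mem_blockPartitions_sdiff h.2.1 h.1.2
    have hcR := notMem_of_mem_blockPartitions_sdiff h'.2.1 h'.1.2
    have hP := (insert_mem_blockPartitions hbQ).2 ⟨h.1.1, h.2.1⟩
    obtain rfl : b = c := block_unique_of_mem_blockPartitions hP (mem_insert_self b Q)
      (heq ▸ mem_insert_self c R) h.1.2 h'.1.2
    rw [← erase_insert hbQ, heq, erase_insert hcR]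
  · intro P hP
    rw [mem_filter] at hP
    obtain ⟨b, hb, hxb⟩ := exists_mem_of_mem_blockPartitions hP.1 hx
    have hins := insert_erase hb
    have hmem := (insert_mem_blockPartitions (notMem_erase b P)).1 (hins.symm ▸ hP.1)
    refine ⟨⟨b, P.erase b⟩, ?_, hins⟩
    simp only [mem_sigma, mem_filter]
    exact ⟨⟨hmem.1, hxb⟩, hmem.2, hins.symm ▸ hP.2⟩

lemma relabel_mem_blockPartitions (f : α ↪ β) :
    relabel f P ∈ blockPartitions (S.map f) d ↔ P ∈ blockPartitions S d := by
  have hunion : (relabel f P).biUnion id = (P.biUnion id).map f := by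
    ext
    simp only [relabel_apply, mem_biUnion, mem_map, RelEmbedding.coe_toEmbedding,
      mapEmbedding_apply, exists_exists_and_eq_and, id]
    grind
  have hdisj : (relabel f P : Set (Finset β)).PairwiseDisjoint id ↔
      (P : Set (Finset α)).PairwiseDisjoint id := by
    rw [relabel_apply, coe_map, RelEmbedding.coe_toEmbedding,
      (mapEmbedding f).injective.injOn.pairwiseDisjoint_image]
    simp [Set.PairwiseDisjoint, Set.Pairwise, Function.onFun]
  simp only [mem_blockPartitions, hunion, map_inj, hdisj]
  simp [relabel_apply]

lemma blockPartitions_map (f : α ↪ β) (S : Finset α) (d : ℕ) :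
    blockPartitions (S.map f) d = (blockPartitions S d).map (relabel f) := by
  ext P'
  refine ⟨fun hP' ↦ ?_, fun hP' ↦ ?_⟩
  · have hsub : P' ⊆ (S.powersetCard d).map (mapEmbedding f).toEmbedding := by
      rw [← powersetCard_map]
      exact fun b hb ↦ mem_powersetCard.2
        ⟨subset_of_mem_blockPartitions hP' hb, (mem_blockPartitions.1 hP').1 b hb⟩
    obtain ⟨P, -, rfl⟩ := subset_map_iff.1 hsub
    exact mem_map_of_mem _ ((relabel_mem_blockPartitions f).1 hP')
  · obtain ⟨P, hP, rfl⟩ := mem_map.1 hP'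
    exact (relabel_mem_blockPartitions f).2 hP

end BlockPartitions

lemma isLinearDiagram_iff_mem_blockPartitions {N d : ℕ} {P : Finset (Finset ℕ)} :
    IsLinearDiagram N d P ↔ P ∈ blockPartitions (Icc 1 N) d := by
  constructor
  · rintro ⟨hcard, hsub, huniq⟩
    refine mem_blockPartitions.2 ⟨hcard, ?_, fun b hb c hc hbc ↦ disjoint_left.2 fun x hxb hxc ↦ ?_⟩
    · ext x
      rw [mem_biUnion]
      exact ⟨fun ⟨b, hb, hx⟩ ↦ hsub b hb x hx, fun hx ↦ (huniq x hx).exists⟩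
    · exact hbc ((huniq x (hsub b hb x hxb)).unique ⟨hb, hxb⟩ ⟨hc, hxc⟩)
  · refine fun hP ↦ ⟨(mem_blockPartitions.1 hP).1,
      fun b hb x hx ↦ subset_of_mem_blockPartitions hP hb hx, fun x hx ↦ ?_⟩
    obtain ⟨b, hb, hxb⟩ := exists_mem_of_mem_blockPartitions hP hx
    exact ⟨b, ⟨hb, hxb⟩, fun c hc ↦ block_unique_of_mem_blockPartitions hP hc.1 hb hc.2 hxb⟩

section Loops

variable {S b : Finset ℕ} {d i : ℕ} {P Q : Finset (Finset ℕ)}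

/-- The loops formed by a single block, each recorded by its left end. -/
def blockLoops (b : Finset ℕ) : Finset ℕ := {i ∈ b | i + 1 ∈ b}

/-- The loops of a family of blocks, each recorded by its left end. -/
def loops (P : Finset (Finset ℕ)) : Finset ℕ := P.biUnion blockLoops

lemma mem_blockLoops : i ∈ blockLoops b ↔ i ∈ b ∧ i + 1 ∈ b := mem_filter

lemma mem_loops : i ∈ loops P ↔ ∃ b ∈ P, i ∈ b ∧ i + 1 ∈ b := by
  simp only [loops, mem_biUnion, mem_blockLoops]

lemma loops_insert (b : Finset ℕ) (Q : Finset (Finset ℕ)) :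
    loops (insert b Q) = blockLoops b ∪ loops Q := biUnion_insert

lemma mem_and_succ_mem_of_mem_loops (hP : P ∈ blockPartitions S d) (hi : i ∈ loops P) :
    i ∈ S ∧ i + 1 ∈ S := by
  obtain ⟨b, hb, h, h'⟩ := mem_loops.1 hi
  have hbS := subset_of_mem_blockPartitions hP hb
  exact ⟨hbS h, hbS h'⟩

lemma loops_subset_Ico {N : ℕ} (hP : P ∈ blockPartitions (Icc 1 N) d) : loops P ⊆ Ico 1 N := by
  intro i hi
  have := mem_and_succ_mem_of_mem_loops hP hi
  simp only [mem_Icc, mem_Ico] at this ⊢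
  omega

lemma linLoops_eq_card_loops {N : ℕ} (hP : P ∈ blockPartitions (Icc 1 N) d) :
    linLoops N P = #(loops P) := by
  rw [linLoops, ← Set.ncard_coe_finset]
  congr 1
  ext i
  simp only [Set.mem_ofPred_eq, mem_coe, ← mem_loops]
  refine ⟨fun h ↦ h.2.2, fun h ↦ ?_⟩
  have := mem_Ico.1 (loops_subset_Ico hP h)
  exact ⟨this.1, this.2, h⟩

/-- The number of partitions of `S` into blocks of size `d` whose set of loops is exactly `L`. -/
noncomputable def numWithLoops (S : Finset ℕ) (d : ℕ) (L : Finset ℕ) : ℕ :=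
  #{P ∈ blockPartitions S d | loops P = L}

lemma numA_eq_sum_numWithLoops (d n k : ℕ) :
    numA d n k = ∑ L ∈ (Ico 1 (n * d)).powersetCard k, numWithLoops (Icc 1 (n * d)) d L := by
  have hset : {P | IsLinearDiagram (n * d) d P ∧ linLoops (n * d) P = k} =
      (({P ∈ blockPartitions (Icc 1 (n * d)) d | #(loops P) = k} : Finset _) : Set _) := by
    ext P
    simp only [Set.mem_ofPred_eq, coe_filter, isLinearDiagram_iff_mem_blockPartitions]
    exact and_congr_right fun hP ↦ by rw [linLoops_eq_card_loops hP]
  rw [numA, hset, Set.ncard_coe_finset, card_eq_sum_card_fiberwise (f := loops)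
    (t := (Ico 1 (n * d)).powersetCard k)]
  · refine sum_congr rfl fun L hL ↦ ?_
    rw [numWithLoops, filter_filter]
    congr 1
    refine filter_congr fun P _ ↦ and_iff_right_of_imp fun h ↦ ?_
    rw [h, (mem_powersetCard.1 hL).2]
  · intro P hP
    simp only [coe_filter, Set.mem_ofPred_eq] at hP
    exact mem_powersetCard.2 ⟨loops_subset_Ico hP.1, hP.2⟩

lemma numA_zero_right (d n : ℕ) : numA d n 0 = numWithLoops (Icc 1 (n * d)) d ∅ := by
  rw [numA_eq_sum_numWithLoops, powersetCard_zero, sum_singleton]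

lemma numA_one_right (d n : ℕ) :
    numA d n 1 = ∑ i ∈ Ico 1 (n * d), numWithLoops (Icc 1 (n * d)) d {i} := by
  rw [numA_eq_sum_numWithLoops, powersetCard_one, sum_map]
  rfl

lemma numWithLoops_singleton_of_notMem (d : ℕ) (hi : i ∉ S) : numWithLoops S d {i} = 0 := by
  rw [numWithLoops, card_eq_zero, filter_eq_empty_iff]
  intro P hP h
  exact hi (mem_and_succ_mem_of_mem_loops hP (h ▸ mem_singleton_self i)).1

lemma numWithLoops_eq_sum_block {x : ℕ} (hx : x ∈ S) (d : ℕ) (L : Finset ℕ) :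
    numWithLoops S d L = ∑ b ∈ S.powersetCard d with x ∈ b ∧ blockLoops b ⊆ L,
      numWithLoops (S \ b) d (L \ blockLoops b) := by
  rw [numWithLoops, card_filter_blockPartitions_eq_sum_block hx, ← filter_filter,
    sum_filter (blockLoops · ⊆ L)]
  refine sum_congr rfl fun b _ ↦ ?_
  have hloops : ∀ Q ∈ blockPartitions (S \ b) d,
      (loops (insert b Q) = L ↔ blockLoops b ⊆ L ∧ loops Q = L \ blockLoops b) := by
    intro Q hQ
    have hdisj : Disjoint (blockLoops b) (loops Q) := disjoint_left.2 fun i hb hQ' ↦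
      (mem_sdiff.1 (mem_and_succ_mem_of_mem_loops hQ hQ').1).2 (mem_blockLoops.1 hb).1
    rw [loops_insert]
    constructor
    · rintro rfl
      exact ⟨subset_union_left, (union_sdiff_cancel_left hdisj).symm⟩
    · rintro ⟨hsub, h⟩
      rw [h, union_sdiff_of_subset hsub]
  rw [filter_congr hloops]
  split_ifs with hsub
  · simp only [hsub, true_and, numWithLoops]
  · simp only [hsub, false_and, filter_false, card_empty]

end Loops

section Gap

/-- The increasing map `ℕ → ℕ` whose only omitted value is `k + 1`. Relabelling along it separates
`k` from `k + 1`, so it destroys a loop at `k` and keeps all the other ones. -/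
def gapAfter (k : ℕ) : ℕ ↪ ℕ where
  toFun j := if j ≤ k then j else j + 1
  inj' a b h := by grind

lemma gapAfter_apply (k j : ℕ) : gapAfter k j = if j ≤ k then j else j + 1 := rfl

lemma gapAfter_self (k : ℕ) : gapAfter k k = k := if_pos le_rfl

lemma gapAfter_add_one_eq_iff {k i j : ℕ} :
    gapAfter k i + 1 = gapAfter k j ↔ i ≠ k ∧ i + 1 = j := by
  grind [gapAfter_apply]

lemma map_gapAfter_Icc {k M : ℕ} (h : k ≤ M) :
    (Icc 1 M).map (gapAfter k) = (Icc 1 (M + 1)).erase (k + 1) := by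
  ext x
  simp only [mem_map, mem_erase, mem_Icc, gapAfter_apply]
  refine ⟨by grind, fun hx ↦ ⟨if x ≤ k then x else x - 1, by grind⟩⟩

lemma blockLoops_map_gapAfter (k : ℕ) (b : Finset ℕ) :
    blockLoops (b.map (gapAfter k)) = ((blockLoops b).erase k).map (gapAfter k) := by
  ext x
  simp only [mem_blockLoops, mem_map, mem_erase]
  constructor
  · rintro ⟨⟨i, hi, rfl⟩, j, hj, h⟩
    obtain ⟨hik, rfl⟩ := gapAfter_add_one_eq_iff.1 h.symm
    exact ⟨i, ⟨hik, hi, hj⟩, rfl⟩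
  · rintro ⟨i, ⟨hik, hi, hi'⟩, rfl⟩
    exact ⟨⟨i, hi, rfl⟩, i + 1, hi', (gapAfter_add_one_eq_iff.2 ⟨hik, rfl⟩).symm⟩

lemma loops_relabel_gapAfter (k : ℕ) (P : Finset (Finset ℕ)) :
    loops (relabel (gapAfter k) P) = ((loops P).erase k).map (gapAfter k) := by
  ext x
  simp only [loops, relabel_apply, mem_biUnion, mem_map, RelEmbedding.coe_toEmbedding,
    mapEmbedding_apply, exists_exists_and_eq_and, blockLoops_map_gapAfter, mem_erase]
  grind

lemma numWithLoops_map_gapAfter (S : Finset ℕ) (d k : ℕ) :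
    numWithLoops (S.map (gapAfter k)) d ∅ = numWithLoops S d ∅ + numWithLoops S d {k} := by
  have hdisj : Disjoint {P ∈ blockPartitions S d | loops P = ∅}
      {P ∈ blockPartitions S d | loops P = {k}} :=
    disjoint_filter.2 fun P _ h h' ↦ singleton_ne_empty k (h'.symm.trans h)
  rw [numWithLoops, blockPartitions_map, filter_map, card_map, numWithLoops, numWithLoops,
    ← card_union_of_disjoint hdisj, ← filter_or]
  simp only [Function.comp_def, loops_relabel_gapAfter, map_eq_empty, erase_eq_empty_iff]

lemma numWithLoops_Icc_sdiff_last {k K : ℕ} (h : k ≤ K) (d : ℕ) :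
    numWithLoops (Icc 1 (K + 2) \ {k + 1, K + 2}) d ∅ =
      numWithLoops (Icc 1 K) d ∅ + numWithLoops (Icc 1 K) d {k} := by
  rw [← numWithLoops_map_gapAfter, map_gapAfter_Icc h]
  congr 1
  ext x
  simp only [mem_sdiff, mem_Icc, mem_insert, mem_singleton, mem_erase]
  omega

lemma sum_numWithLoops_Icc_sdiff_last (K d : ℕ) :
    ∑ u ∈ Icc 1 K, numWithLoops (Icc 1 (K + 2) \ {u, K + 2}) d ∅ =
      K * numWithLoops (Icc 1 K) d ∅ + ∑ i ∈ Ico 1 K, numWithLoops (Icc 1 K) d {i} := by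
  have hrange : ∑ i ∈ Ico 1 K, numWithLoops (Icc 1 K) d {i} =
      ∑ i ∈ range K, numWithLoops (Icc 1 K) d {i} := by
    refine sum_subset (fun i hi ↦ mem_range.2 (mem_Ico.1 hi).2) fun i hi hi' ↦
      numWithLoops_singleton_of_notMem d fun h ↦ hi' ?_
    exact mem_Ico.2 ⟨(mem_Icc.1 h).1, mem_range.1 hi⟩
  calc ∑ u ∈ Icc 1 K, numWithLoops (Icc 1 (K + 2) \ {u, K + 2}) d ∅
      = ∑ k ∈ range K, numWithLoops (Icc 1 (K + 2) \ {k + 1, K + 2}) d ∅ := by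
        rw [range_eq_Ico, sum_Ico_add' (fun u ↦ numWithLoops (Icc 1 (K + 2) \ {u, K + 2}) d ∅)]
        rfl
    _ = ∑ k ∈ range K, (numWithLoops (Icc 1 K) d ∅ + numWithLoops (Icc 1 K) d {k}) :=
        sum_congr rfl fun k hk ↦ numWithLoops_Icc_sdiff_last (mem_range.1 hk).le d
    _ = K * numWithLoops (Icc 1 K) d ∅ + ∑ i ∈ Ico 1 K, numWithLoops (Icc 1 K) d {i} := by
        rw [sum_add_distrib, sum_const, card_range, smul_eq_mul, hrange]

end Gap

section Triples

/-- The pairs of points of `{1,…,m}` that are neither equal nor adjacent, in increasing order. -/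
def separatedPairs (m : ℕ) : Finset (ℕ × ℕ) := {t ∈ Icc 1 m ×ˢ Icc 1 m | t.1 + 2 ≤ t.2}

lemma mk_mem_separatedPairs {m u v : ℕ} :
    (u, v) ∈ separatedPairs m ↔ 1 ≤ u ∧ u + 2 ≤ v ∧ v ≤ m := by
  simp only [separatedPairs, mem_filter, mem_product, mem_Icc]
  omega

lemma sum_separatedPairs_add_two {M : Type*} [AddCommMonoid M] (m : ℕ) (f : ℕ × ℕ → M) :
    ∑ t ∈ separatedPairs (m + 2), f t =
      ∑ t ∈ separatedPairs (m + 1), f t + ∑ u ∈ Icc 1 m, f (u, m + 2) := by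
  have hdisj : Disjoint (separatedPairs (m + 1)) (Icc 1 m ×ˢ {m + 2}) := by
    refine disjoint_left.2 fun ⟨u, v⟩ h h' ↦ ?_
    rw [mk_mem_separatedPairs] at h
    simp only [mem_product, mem_singleton] at h'
    omega
  have hunion : separatedPairs (m + 2) = separatedPairs (m + 1) ∪ Icc 1 m ×ˢ {m + 2} := by
    ext ⟨u, v⟩
    simp only [mem_union, mk_mem_separatedPairs, mem_product, mem_Icc, mem_singleton]
    omega
  rw [hunion, sum_union hdisj, sum_product]
  simp only [sum_singleton]

lemma sum_sum_separated_eq_two_nsmul {M : Type*} [AddCommMonoid M] (m : ℕ) (f : ℕ → ℕ → M)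
    (hf : ∀ u v, f u v = f v u) :
    ∑ i ∈ Icc 1 m, ∑ z ∈ Icc 1 m with i + 2 ≤ z ∨ z + 2 ≤ i, f i z =
      2 • ∑ t ∈ separatedPairs m, f t.1 t.2 := by
  have hsplit (i : ℕ) : ∑ z ∈ Icc 1 m with i + 2 ≤ z ∨ z + 2 ≤ i, f i z =
      ∑ z ∈ Icc 1 m with i + 2 ≤ z, f i z + ∑ z ∈ Icc 1 m with z + 2 ≤ i, f z i := by
    have hdisj : Disjoint {z ∈ Icc 1 m | i + 2 ≤ z} {z ∈ Icc 1 m | z + 2 ≤ i} :=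
      disjoint_filter.2 fun z _ h h' ↦ by omega
    rw [filter_or, sum_union hdisj]
    simp only [hf i]
  simp only [hsplit, sum_add_distrib, two_nsmul, separatedPairs, sum_filter, sum_product]
  congr 1
  exact sum_comm

lemma exists_eq_triple_of_card_eq_three {α : Type*} [DecidableEq α] {b : Finset α} {x y : α}
    (hb : #b = 3) (hx : x ∈ b) (hy : y ∈ b) (hxy : x ≠ y) :
    ∃ z, z ≠ x ∧ z ≠ y ∧ b = {x, y, z} := by
  have hy' : y ∈ b.erase x := mem_erase.2 ⟨hxy.symm, hy⟩
  obtain ⟨z, hz⟩ : ∃ z, (b.erase x).erase y = {z} := by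
    rw [← card_eq_one, card_erase_of_mem hy', card_erase_of_mem hx, hb]
  have hz' : z ∈ (b.erase x).erase y := hz ▸ mem_singleton_self z
  simp only [mem_erase] at hz'
  exact ⟨z, hz'.2.1, hz'.1, by rw [← hz, insert_erase hy', insert_erase hx]⟩

lemma blockLoops_triple_gapAfter {i z : ℕ} (h : i + 2 ≤ z ∨ z + 2 ≤ i) :
    blockLoops {i, i + 1, gapAfter i z} = {i} := by
  ext x
  simp only [mem_blockLoops, mem_insert, mem_singleton, gapAfter_apply]
  split_ifs <;> omega

lemma card_triple_gapAfter {i z : ℕ} (h : i + 2 ≤ z ∨ z + 2 ≤ i) :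
    #({i, i + 1, gapAfter i z} : Finset ℕ) = 3 :=
  card_eq_three.2 ⟨_, _, _, by omega, by grind [gapAfter_apply], by grind [gapAfter_apply], rfl⟩

lemma exists_eq_triple_gapAfter {b : Finset ℕ} {i : ℕ} (hb : #b = 3)
    (hloops : blockLoops b = {i}) :
    ∃ z, (i + 2 ≤ z ∨ z + 2 ≤ i) ∧ b = {i, i + 1, gapAfter i z} := by
  obtain ⟨hi, hi'⟩ := mem_blockLoops.1 (hloops ▸ mem_singleton_self i)
  obtain ⟨y, hyi, hyi', rfl⟩ := exists_eq_triple_of_card_eq_three hb hi hi' (by omega)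
  have hloop : ∀ j, j ∈ ({i, i + 1, y} : Finset ℕ) ∧ j + 1 ∈ ({i, i + 1, y} : Finset ℕ) ↔ j = i :=
    fun j ↦ by rw [← mem_blockLoops, hloops, mem_singleton]
  have hright := hloop (i + 1)
  have hleft := hloop y
  simp only [mem_insert, mem_singleton] at hright hleft
  have hgap : gapAfter i (if y ≤ i then y else y - 1) = y := by grind [gapAfter_apply]
  exact ⟨if y ≤ i then y else y - 1, by grind, by rw [hgap]⟩

lemma numWithLoops_Icc_sdiff_triple_gapAfter {M i : ℕ} (hi : i ∈ Icc 1 M) (z d : ℕ) :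
    numWithLoops (Icc 1 (M + 1) \ {i, i + 1, gapAfter i z}) d ∅ =
      numWithLoops (Icc 1 M \ {i, z}) d ∅ := by
  have hmap : (Icc 1 M \ {i, z}).map (gapAfter i) =
      Icc 1 (M + 1) \ {i, i + 1, gapAfter i z} := by
    rw [Finset.map_sdiff, map_gapAfter_Icc (mem_Icc.1 hi).2, map_insert, map_singleton,
      gapAfter_self]
    ext x
    simp only [mem_sdiff, mem_erase, mem_insert, mem_singleton]
    tauto
  rw [← hmap, numWithLoops_map_gapAfter, numWithLoops_singleton_of_notMem d (by simp), add_zero]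

lemma numWithLoops_three_singleton {M i : ℕ} (hi : i ∈ Icc 1 M) :
    numWithLoops (Icc 1 (M + 1)) 3 {i} =
      ∑ z ∈ Icc 1 M with i + 2 ≤ z ∨ z + 2 ≤ i, numWithLoops (Icc 1 M \ {i, z}) 3 ∅ := by
  have hiM := mem_Icc.1 hi
  rw [numWithLoops_eq_sum_block (mem_Icc.2 ⟨hiM.1, by omega⟩ : i ∈ Icc 1 (M + 1))]
  symm
  refine sum_of_injOn (fun z ↦ {i, i + 1, gapAfter i z}) ?_ ?_ ?_ ?_
  · intro z hz w _ h
    simp only [coe_filter, Set.mem_ofPred_eq] at hz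
    have hzw : gapAfter i z ∈ ({i, i + 1, gapAfter i w} : Finset ℕ) := by simp [← h]
    simp only [mem_insert, mem_singleton] at hzw
    have hgap : gapAfter i z = gapAfter i w := by grind [gapAfter_apply]
    exact (gapAfter i).injective hgap
  · intro z hz
    simp only [coe_filter, mem_Icc, Set.mem_ofPred_eq] at hz ⊢
    refine ⟨mem_powersetCard.2 ⟨?_, card_triple_gapAfter hz.2⟩, mem_insert_self _ _,
      (blockLoops_triple_gapAfter hz.2).subset⟩
    grind [gapAfter_apply]
  · intro b hb hrange
    simp only [mem_filter, mem_powersetCard] at hb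
    obtain hempty | hsingle := subset_singleton_iff.1 hb.2.2
    · rw [hempty, sdiff_empty]
      exact numWithLoops_singleton_of_notMem 3 fun h ↦ (mem_sdiff.1 h).2 hb.2.1
    · obtain ⟨z, hz, rfl⟩ := exists_eq_triple_gapAfter hb.1.2 hsingle
      refine absurd ⟨z, ?_, rfl⟩ hrange
      have hzM : gapAfter i z ∈ Icc 1 (M + 1) := hb.1.1 (by simp)
      grind [gapAfter_apply]
  · intro z hz
    rw [blockLoops_triple_gapAfter (mem_filter.1 hz).2, Finset.sdiff_self,
      numWithLoops_Icc_sdiff_triple_gapAfter hi]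

lemma sum_numWithLoops_three_singleton (M : ℕ) :
    ∑ i ∈ Icc 1 M, numWithLoops (Icc 1 (M + 1)) 3 {i} =
      2 * ∑ t ∈ separatedPairs M, numWithLoops (Icc 1 M \ {t.1, t.2}) 3 ∅ := by
  rw [sum_congr rfl fun i hi ↦ numWithLoops_three_singleton hi]
  exact sum_sum_separated_eq_two_nsmul M (fun u v ↦ numWithLoops (Icc 1 M \ {u, v}) 3 ∅)
    fun u v ↦ by rw [pair_comm]

lemma blockLoops_triple_last {u v M : ℕ} (huv : u + 2 ≤ v) (hv : v ≤ M) :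
    blockLoops {u, v, M + 2} = ∅ := by
  ext x
  simp only [mem_blockLoops, mem_insert, mem_singleton, notMem_empty, iff_false]
  omega

lemma exists_eq_triple_last {b : Finset ℕ} {M : ℕ} (hb : b ∈ (Icc 1 (M + 2)).powersetCard 3)
    (hlast : M + 2 ∈ b) (hloops : blockLoops b = ∅) :
    ∃ u v, (u, v) ∈ separatedPairs M ∧ b = {u, v, M + 2} := by
  obtain ⟨hsub, hcard⟩ := mem_powersetCard.1 hb
  have herase : #(b.erase (M + 2)) = 2 := by rw [card_erase_of_mem hlast, hcard]
  obtain ⟨u, v, huv, hpair⟩ : ∃ u v, u < v ∧ b.erase (M + 2) = {u, v} := by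
    obtain ⟨x, y, hxy, h⟩ := card_eq_two.1 herase
    rcases hxy.lt_or_gt with hlt | hlt
    · exact ⟨x, y, hlt, h⟩
    · exact ⟨y, x, hlt, h.trans (pair_comm x y)⟩
  have hb_eq : b = {u, v, M + 2} := by
    rw [← insert_erase hlast, hpair]
    grind
  have hnot (j : ℕ) (hj : j ∈ b) (hj' : j + 1 ∈ b) : False :=
    notMem_empty j (hloops ▸ mem_blockLoops.2 ⟨hj, hj'⟩)
  refine ⟨u, v, mk_mem_separatedPairs.2 ?_, hb_eq⟩
  have hu := hnot u
  have hv := hnot v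
  grind

lemma numWithLoops_three_empty (M : ℕ) :
    numWithLoops (Icc 1 (M + 2)) 3 ∅ =
      ∑ t ∈ separatedPairs M, numWithLoops (Icc 1 (M + 1) \ {t.1, t.2}) 3 ∅ := by
  rw [numWithLoops_eq_sum_block (mem_Icc.2 ⟨by omega, le_refl (M + 2)⟩)]
  symm
  refine sum_of_injOn (fun t ↦ {t.1, t.2, M + 2}) ?_ ?_ ?_ ?_
  · rintro ⟨u, v⟩ h ⟨u', v'⟩ h' heq
    rw [mem_coe, mk_mem_separatedPairs] at h h'
    have hu : u ∈ ({u', v', M + 2} : Finset ℕ) := by simp [← heq]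
    have hv : v ∈ ({u', v', M + 2} : Finset ℕ) := by simp [← heq]
    simp only [mem_insert, mem_singleton] at hu hv
    rw [Prod.mk.injEq]
    omega
  · rintro ⟨u, v⟩ h
    simp only [coe_filter, Set.mem_ofPred_eq, mem_powersetCard, subset_empty]
    rw [mem_coe, mk_mem_separatedPairs] at h
    refine ⟨⟨by grind, card_eq_three.2 ⟨_, _, _, ?_, ?_, ?_, rfl⟩⟩, by simp,
      blockLoops_triple_last h.2.1 h.2.2⟩ <;> omega
  · intro b hb hrange
    simp only [mem_filter, subset_empty] at hb
    obtain ⟨u, v, huv, rfl⟩ := exists_eq_triple_last hb.1 hb.2.1 hb.2.2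
    exact absurd ⟨(u, v), huv, rfl⟩ hrange
  · rintro ⟨u, v⟩ h
    rw [empty_sdiff]
    congr 1
    rw [mk_mem_separatedPairs] at h
    ext x
    simp only [mem_sdiff, mem_Icc, mem_insert, mem_singleton]
    omega

end Triples

/-- for `d = 3` and `n ≥ 1`,
`a(n,1) = 2·a(n,0) + 2(3n−3)·a(n−1,0) + 2·a(n−1,1)`. -/
theorem linear_rec_three_one (n : ℕ) (hn : 1 ≤ n) :
    numA 3 n 1 = 2 * numA 3 n 0 + 2 * (3 * n - 3) * numA 3 (n - 1) 0 +
      2 * numA 3 (n - 1) 1 := by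
  obtain ⟨m, rfl⟩ := Nat.exists_eq_add_of_le' hn
  set K := m * 3
  have hpoints : (m + 1) * 3 = K + 3 := by omega
  have hone : numA 3 (m + 1) 1 = 2 * ∑ t ∈ separatedPairs (K + 2),
      numWithLoops (Icc 1 (K + 2) \ {t.1, t.2}) 3 ∅ := by
    rw [numA_one_right, hpoints, ← sum_numWithLoops_three_singleton]
    rfl
  have hzero : numA 3 (m + 1) 0 = ∑ t ∈ separatedPairs (K + 1),
      numWithLoops (Icc 1 (K + 2) \ {t.1, t.2}) 3 ∅ := by
    rw [numA_zero_right, hpoints, numWithLoops_three_empty]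
  have hlast : ∑ u ∈ Icc 1 K, numWithLoops (Icc 1 (K + 2) \ {u, K + 2}) 3 ∅ =
      K * numA 3 m 0 + numA 3 m 1 := by
    rw [numA_zero_right, numA_one_right, sum_numWithLoops_Icc_sdiff_last]
  have hfactor : 3 * (m + 1) - 3 = K := by omega
  rw [hone, sum_separatedPairs_add_two, ← hzero, hlast, hfactor, Nat.add_sub_cancel]
  ring
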